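/- Let S be a finite Boolean inverse monoid. Then: (1) S is fundamental if and only if its groupoid of atoms is principal; (2) S is 0-simplifying if and only if its groupoid of atoms is connected. -/

import Mathlib

namespace Paper

/-- An inverse semigroup with zero: an associative multiplication, a zero that is
absorbing, and a map `⁻¹` sending each element to its unique generalized inverse. -/
class IsInverseSemigroup (S : Type*) [Mul S] [Zero S] [Inv S] : Prop where
  mul_assoc : ∀ a b c : S, a * b * c = a * (b * c)
  mul_inv_mul : ∀ a : S, a * a⁻¹ * a = a
  inv_mul_inv : ∀ a : S, a⁻¹ * a * a⁻¹ = a⁻¹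
  inv_unique : ∀ a b : S, a * b * a = a → b * a * b = b → b = a⁻¹
  zero_mul : ∀ a : S, 0 * a = 0
  mul_zero : ∀ a : S, a * 0 = 0

variable {S : Type*} [Mul S] [Zero S] [Inv S]

/-- The natural partial order: `a ≤ b` iff `a = b * a⁻¹ * a`. -/
def nle (a b : S) : Prop := a = b * a⁻¹ * a

/-- `e` is an idempotent. -/
def idem (e : S) : Prop := e * e = e

/-- `a` and `b` are compatible. -/
def compat (a b : S) : Prop := idem (a⁻¹ * b) ∧ idem (a * b⁻¹)

/-- `a` and `b` are orthogonal. -/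
def orth (a b : S) : Prop := a⁻¹ * b = 0 ∧ a * b⁻¹ = 0

/-- `j` is the least upper bound of `a` and `b` for the natural partial order. -/
def isJoin (a b j : S) : Prop :=
  nle a j ∧ nle b j ∧ ∀ c : S, nle a c → nle b c → nle j c

/-- `m` is the greatest lower bound of `a` and `b` for the natural partial order. -/
def isMeet (a b m : S) : Prop :=
  nle m a ∧ nle m b ∧ ∀ c : S, nle c a → nle c b → nle c m

/-- `a` is an atom: a nonzero element with nothing strictly between it and `0`. -/
def isAtomElem (a : S) : Prop := a ≠ 0 ∧ ∀ x : S, nle x a → x = a ∨ x = 0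

/-- `s` is the least upper bound of the finite family `f`. -/
def isJoinFin {m : ℕ} (f : Fin m → S) (s : S) : Prop :=
  (∀ i, nle (f i) s) ∧ ∀ c : S, (∀ i, nle (f i) c) → nle s c

/-- A Boolean inverse semigroup: a nonzero inverse semigroup with zero in which
compatible pairs have joins, multiplication distributes over binary compatible joins,
and the idempotents form a generalized Boolean algebra under the natural partial
order (meets of idempotents are automatically given by multiplication; the extra
requirement is the existence of relative complements). -/
class IsBooleanInverseSemigroup (S : Type*) [Mul S] [Zero S] [Inv S]
    extends IsInverseSemigroup S : Prop where
  exists_ne_zero : ∃ a : S, a ≠ 0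
  compat_join : ∀ a b : S, compat a b → ∃ j, isJoin a b j
  mul_join : ∀ a b j c : S, isJoin a b j → isJoin (c * a) (c * b) (c * j)
  join_mul : ∀ a b j c : S, isJoin a b j → isJoin (a * c) (b * c) (j * c)
  relcomp : ∀ e f : S, idem e → idem f → nle f e →
    ∃ g : S, idem g ∧ nle g e ∧ g * f = 0 ∧ isJoin f g e


/-- An additive ideal: a nonempty two-sided semigroup ideal closed under binary
compatible joins. -/
def isAdditiveIdeal {S : Type*} [Mul S] [Inv S] (I : Set S) : Prop :=
  I.Nonempty ∧ (∀ a ∈ I, ∀ s : S, s * a ∈ I ∧ a * s ∈ I) ∧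
    (∀ a ∈ I, ∀ b ∈ I, compat a b → ∀ j : S, isJoin a b j → j ∈ I)

/-- `f ≼ e`: there is a pencil `x₁, …, xₘ` from `f` to `e`, i.e.
`f = ⋁ᵢ d(xᵢ)` and `r(xᵢ) ≤ e` for all `i`. -/
def pencilLe {S : Type*} [Mul S] [Inv S] (f e : S) : Prop :=
  ∃ (m : ℕ) (x : Fin (m + 1) → S),
    isJoinFin (fun i => (x i)⁻¹ * x i) f ∧ ∀ i, nle (x i * (x i)⁻¹) e

/-- `S` is `0`-simplifying: it is nonzero and its only additive ideals are `{0}`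
and `S`. -/
def isZeroSimplifying (S : Type*) [Mul S] [Zero S] [Inv S] : Prop :=
  (∃ a : S, a ≠ 0) ∧
    ∀ I : Set S, isAdditiveIdeal I → I = {(0 : S)} ∨ I = Set.univ

/-- `S` is fundamental: every element commuting with all idempotents is idempotent. -/
def isFundamental (S : Type*) [Mul S] : Prop :=
  ∀ a : S, (∀ e : S, idem e → a * e = e * a) → idem a

/-- A morphism (additive homomorphism) of Boolean inverse semigroups: a semigroup
homomorphism preserving `0` and binary compatible joins. -/
def isMorphism {S : Type*} {T : Type*} [Mul S] [Zero S] [Inv S]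
    [Mul T] [Zero T] [Inv T] (θ : S → T) : Prop :=
  (∀ a b : S, θ (a * b) = θ a * θ b) ∧ θ 0 = 0 ∧
    ∀ a b j : S, compat a b → isJoin a b j → isJoin (θ a) (θ b) (θ j)

section Helpers
variable [IsBooleanInverseSemigroup S]

lemma ma (a b c : S) : a * b * c = a * (b * c) := IsInverseSemigroup.mul_assoc a b c
lemma aia (a : S) : a * (a⁻¹ * a) = a := by rw [← ma]; exact IsInverseSemigroup.mul_inv_mul a
lemma iai (a : S) : a⁻¹ * (a * a⁻¹) = a⁻¹ := by rw [← ma]; exact IsInverseSemigroup.inv_mul_inv a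
lemma iu {a b : S} (h : a * (b * a) = a) (h' : b * (a * b) = b) : b = a⁻¹ :=
  IsInverseSemigroup.inv_unique a b (by rw [ma, h]) (by rw [ma, h'])
lemma zm (a : S) : 0 * a = 0 := IsInverseSemigroup.zero_mul a
lemma mz (a : S) : a * 0 = 0 := IsInverseSemigroup.mul_zero a
lemma ii (a : S) : a⁻¹⁻¹ = a := (iu (iai a) (aia a)).symm
lemma idem_inv {e : S} (h : idem e) : e⁻¹ = e := by
  unfold idem at h
  exact (iu (by rw [h, h]) (by rw [h, h])).symm
lemma ass (a b : S) {c : S} (h : a * b = c) (x : S) : a * (b * x) = c * x := by rw [← ma, h]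

lemma idem_mul {e f : S} (he : idem e) (hf : idem f) : idem (e * f) := by
  have h1 := aia (e * f)
  have h2 := iai (e * f)
  generalize hx : (e * f)⁻¹ = x at h1 h2
  unfold idem at he hf
  have he' := ass _ _ he
  have hf' := ass _ _ hf
  simp only [ma] at h1 h2
  have h2' : ∀ y, x * (e * (f * (x * y))) = x * y := fun y => by
    conv_rhs => rw [← h2]
    simp only [ma]
  have key : f * (x * e) = x := by
    rw [← hx]
    refine iu ?_ ?_ <;> rw [hx] <;> simp only [ma]
    · rw [hf', he', h1]
    · rw [he', hf', h2']
  have xi : idem x := by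
    unfold idem
    rw [← key]; simp only [ma]
    rw [h2']
  have : e * f = x := by
    rw [← idem_inv xi, ← hx, ii]
  rw [this]; exact xi

lemma idem_comm {e f : S} (he : idem e) (hf : idem f) : e * f = f * e := by
  have h1 := idem_mul he hf
  have h2 := idem_mul hf he
  rw [← idem_inv h1]
  unfold idem at *
  symm
  have he' := ass _ _ he
  have hf' := ass _ _ hf
  simp only [ma] at h1 h2
  refine iu ?_ ?_ <;> simp only [ma]
  · rw [hf', he', h1]
  · rw [he', hf', h2]

lemma idem_d (a : S) : idem (a⁻¹ * a) := by unfold idem; rw [ma, aia]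
lemma idem_r (a : S) : idem (a * a⁻¹) := by unfold idem; rw [ma, iai]
lemma idem_zero : idem (0 : S) := zm 0

lemma inv_zero' : (0 : S)⁻¹ = 0 := idem_inv idem_zero

lemma mul_inv' (a b : S) : (a * b)⁻¹ = b⁻¹ * a⁻¹ := by
  symm
  have h := idem_comm (idem_d a) (idem_r b)
  have h' : ∀ x, a⁻¹ * (a * (b * (b⁻¹ * x))) = b * (b⁻¹ * (a⁻¹ * (a * x))) := fun x => by
    have := congrArg (· * x) h
    simpa only [ma] using this
  have h'' : ∀ x, b * (b⁻¹ * (a⁻¹ * (a * x))) = a⁻¹ * (a * (b * (b⁻¹ * x))) := fun x => (h' x).symm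
  have ea : ∀ x, a * (a⁻¹ * (a * x)) = a * x := fun x => by
    conv_rhs => rw [← aia a]
    simp only [ma]
  have eb : ∀ x, b⁻¹ * (b * (b⁻¹ * x)) = b⁻¹ * x := fun x => by
    conv_rhs => rw [← iai b]
    simp only [ma]
  refine iu ?_ ?_ <;> simp only [ma]
  · rw [h'', ea, aia]
  · rw [h', eb, iai]

/-- conjugate of an idempotent -/
lemma idem_conj (a : S) {e : S} (he : idem e) : idem (a * (e * a⁻¹)) := by
  have h := idem_comm he (idem_d a)
  have : a * (e * a⁻¹) * (a * (e * a⁻¹)) = a * ((e * (a⁻¹ * a)) * (e * a⁻¹)) := by simp only [ma]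
  unfold idem
  rw [this, h]
  have : a * (a⁻¹ * a * e * (e * a⁻¹)) = (a * (a⁻¹ * a)) * ((e * e) * a⁻¹) := by simp only [ma]
  rw [this, aia, he]

/-- moving an idempotent across -/
lemma move (a : S) {e : S} (he : idem e) : a * e = a * (e * a⁻¹) * a := by
  have : a * (e * a⁻¹) * a = a * (e * (a⁻¹ * a)) := by simp only [ma]
  rw [this, idem_comm he (idem_d a), ← ma, aia]

lemma move' (a : S) {e : S} (he : idem e) : e * a = a * (a⁻¹ * (e * a)) := by
  have : a * (a⁻¹ * (e * a)) = (a * a⁻¹) * e * a := by simp only [ma]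
  rw [this, idem_comm (idem_r a) he, ma, ma, aia]

lemma nle_iff {a b : S} : nle a b ↔ a = b * (a⁻¹ * a) := by unfold nle; rw [ma]

lemma nle_of_mul {b e : S} (he : idem e) : nle (b * e) b := by
  rw [nle_iff, mul_inv', idem_inv he]
  have : b * (e * b⁻¹ * (b * e)) = b * ((e * (b⁻¹ * b)) * e) := by simp only [ma]
  rw [this, idem_comm he (idem_d b)]
  have : b * (b⁻¹ * b * e * e) = b * (b⁻¹ * b) * (e * e) := by simp only [ma]
  rw [this, aia, he]

lemma nle_of_mul' {b e : S} (he : idem e) : nle (e * b) b := by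
  rw [move' b he]
  have := idem_conj b⁻¹ he
  rw [ii] at this
  exact nle_of_mul this

lemma nle_refl (a : S) : nle a a := by rw [nle_iff, aia]

lemma nle_trans {a b c : S} (h : nle a b) (h' : nle b c) : nle a c := by
  rw [nle_iff] at h h'
  have : a = c * ((b⁻¹ * b) * (a⁻¹ * a)) := by rw [← ma, ← h', ← h]
  rw [this]
  exact nle_of_mul (idem_mul (idem_d b) (idem_d a))

lemma nle_zero {a : S} (h : nle a 0) : a = 0 := by
  rw [nle_iff, zm] at h; exact h

lemma zero_nle (a : S) : nle 0 a := by
  have := nle_of_mul (b := a) idem_zero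
  rwa [mz] at this

lemma nle_idem {e f : S} (he : idem e) : nle e f ↔ e = f * e := by
  rw [nle_iff, idem_inv he, he]

lemma idem_of_nle {e f : S} (hf : idem f) (h : nle e f) : idem e := by
  rw [nle_iff] at h; rw [h]; exact idem_mul hf (idem_d e)

lemma d_mul (a : S) {e : S} (he : idem e) : (a * e)⁻¹ * (a * e) = (a⁻¹ * a) * e := by
  rw [mul_inv', idem_inv he]
  have : e * a⁻¹ * (a * e) = (e * (a⁻¹ * a)) * e := by simp only [ma]
  rw [this, idem_comm he (idem_d a), ma, he]

lemma d_mono {a b : S} (h : nle a b) : nle (a⁻¹ * a) (b⁻¹ * b) := by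
  rw [nle_idem (idem_d a)]
  rw [nle_iff] at h
  conv_lhs => rw [h, d_mul b (idem_d a)]

lemma nle_antisymm {a b : S} (h : nle a b) (h' : nle b a) : a = b := by
  have h1 := d_mono h
  have h2 := d_mono h'
  rw [nle_idem (idem_d _)] at h1 h2
  rw [idem_comm (idem_d _) (idem_d _)] at h1
  rw [nle_iff] at h
  rw [h, h1, ← h2, aia]

lemma d_eq_zero {a : S} (h : a⁻¹ * a = 0) : a = 0 := by
  rw [← aia a, h, mz]

/-- atoms among idempotents -/
lemma atom_idem {e g : S} (h : isAtomElem e) (hg : idem g) : e * g = e ∨ e * g = 0 :=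
  h.2 _ (nle_of_mul hg)

lemma atom_of_d {a : S} (h : isAtomElem (a⁻¹ * a)) : isAtomElem a := by
  refine ⟨fun h0 => h.1 (by rw [h0, mz]), fun x hx => ?_⟩
  have := h.2 _ (d_mono hx)
  rw [nle_iff] at hx
  rcases this with h1 | h1
  · left; rw [hx, h1, aia]
  · right; exact d_eq_zero h1

lemma d_atom {a : S} (h : isAtomElem a) : isAtomElem (a⁻¹ * a) := by
  refine ⟨fun h0 => h.1 (d_eq_zero h0), fun x hx => ?_⟩
  have hi := idem_of_nle (idem_d a) hx
  rw [nle_idem hi] at hx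
  rcases h.2 _ (nle_of_mul (b := a) hi) with h1 | h1
  · left; rw [hx, ma, h1]
  · right; rw [hx, ma, h1, mz]

lemma inv_mono {a b : S} (h : nle a b) : nle a⁻¹ b⁻¹ := by
  rw [nle_iff] at h
  rw [h, mul_inv', idem_inv (idem_d a)]
  exact nle_of_mul' (idem_d a)

lemma inv_atom {a : S} (h : isAtomElem a) : isAtomElem a⁻¹ := by
  refine ⟨fun h0 => h.1 (by rw [← ii a, h0, inv_zero']), fun x hx => ?_⟩
  have := inv_mono hx
  rw [ii] at this
  rcases h.2 _ this with h1 | h1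
  · left; rw [← h1, ii]
  · right; rw [← ii x, h1, inv_zero']

lemma r_atom {a : S} (h : isAtomElem a) : isAtomElem (a * a⁻¹) := by
  have := d_atom (inv_atom h)
  rwa [ii] at this

lemma join_zero {j : S} (h : isJoin 0 0 j) : j = 0 :=
  nle_zero (h.2.2 0 (nle_refl 0) (nle_refl 0))

lemma join_idem {x y j : S} (hx : idem x) (hy : idem y) (h : isJoin x y j) : idem j := by
  refine idem_of_nle (idem_d j) (h.2.2 _ ?_ ?_)
  · have := d_mono h.1; rwa [idem_inv hx, hx] at this
  · have := d_mono h.2.1; rwa [idem_inv hy, hy] at this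

lemma compat_idem {x y : S} (hx : idem x) (hy : idem y) : compat x y := by
  unfold compat
  rw [idem_inv hx, idem_inv hy]
  exact ⟨idem_mul hx hy, idem_mul hx hy⟩

lemma wf_nle [Finite S] : WellFounded (fun a b : S => nle a b ∧ a ≠ b) := by
  haveI : Std.Irrefl (fun a b : S => nle a b ∧ a ≠ b) := ⟨fun a h => h.2 rfl⟩
  haveI : IsTrans S (fun a b : S => nle a b ∧ a ≠ b) :=
    ⟨fun a b c h h' => ⟨nle_trans h.1 h'.1, fun hac => by
      subst hac; exact h.2 (nle_antisymm h.1 h'.1)⟩⟩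
  exact Finite.wellFounded_of_trans_of_irrefl _

lemma exists_atom [Finite S] (a : S) (ha : a ≠ 0) : ∃ e, isAtomElem e ∧ nle e a := by
  induction a using (wf_nle (S := S)).induction with
  | _ a ih =>
    by_cases h : isAtomElem a
    · exact ⟨a, h, nle_refl a⟩
    · unfold isAtomElem at h
      push Not at h
      obtain ⟨x, hx, hxa, hx0⟩ := h ha
      obtain ⟨e, he, hex⟩ := ih x ⟨hx, hxa⟩ hx0
      exact ⟨e, he, nle_trans hex hx⟩

lemma idem_induction [Finite S] (P : S → Prop) (h0 : P 0)
    (ha : ∀ e, idem e → isAtomElem e → P e)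
    (hj : ∀ e g f, idem e → idem g → isJoin e g f → P e → P g → P f)
    (f : S) (hf : idem f) : P f := by
  induction f using (wf_nle (S := S)).induction with
  | _ f ih =>
    by_cases h : f = 0
    · rw [h]; exact h0
    · obtain ⟨e, he, hef⟩ := exists_atom f h
      have hei := idem_of_nle hf hef
      obtain ⟨g, hg, hgf, hge, hjn⟩ := IsBooleanInverseSemigroup.relcomp f e hf hei hef
      refine hj e g f hei hg hjn (ha e hei he) (ih g ⟨hgf, ?_⟩ hg)
      rintro rfl
      rw [nle_idem hei, hge] at hef
      exact he.1 hef

/-- if the idempotent atom `g` is not killed by `a`, then `g ≤ d(a)` -/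
lemma atom_below {a g : S} (hg : isAtomElem g) (hgi : idem g) (h : a * g ≠ 0) :
    (a⁻¹ * a) * g = g := by
  rw [idem_comm (idem_d a) hgi]
  rcases atom_idem hg (idem_d a) with h1 | h1
  · exact h1
  · exfalso; apply h
    rw [idem_comm hgi (idem_d a)] at h1
    rw [← aia a, ma, h1, mz]

lemma d_of_below {a g : S} (hgi : idem g) (h : (a⁻¹ * a) * g = g) :
    (a * g)⁻¹ * (a * g) = g := by rw [d_mul a hgi, h]

def conn (e f : S) : Prop := ∃ x : S, isAtomElem x ∧ x⁻¹ * x = e ∧ x * x⁻¹ = f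

lemma conn_trans {e f g : S} (h : conn e f) (h' : conn f g) : conn e g := by
  obtain ⟨x, hx, hxe, hxf⟩ := h
  obtain ⟨y, hy, hyf, hyg⟩ := h'
  have hd : (y * x)⁻¹ * (y * x) = e := by
    rw [mul_inv']
    have : x⁻¹ * y⁻¹ * (y * x) = x⁻¹ * ((y⁻¹ * y) * x) := by simp only [ma]
    rw [this, hyf, ← hxf, ma, aia, hxe]
  refine ⟨y * x, atom_of_d ?_, hd, ?_⟩
  · rw [hd, ← hxe]; exact d_atom hx
  · rw [mul_inv']
    have : y * x * (x⁻¹ * y⁻¹) = y * ((x * x⁻¹) * y⁻¹) := by simp only [ma]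
    rw [this, hxf, ← hyf, ma, iai, hyg]

lemma conn_symm {e f : S} (h : conn e f) : conn f e := by
  obtain ⟨x, hx, hxe, hxf⟩ := h
  exact ⟨x⁻¹, inv_atom hx, by rw [ii, hxf], by rw [ii, hxe]⟩

def connIdeal (e : S) : Set S :=
  {s | ∀ g : S, isAtomElem g → idem g → s * g ≠ 0 → conn e g}

lemma connIdeal_ideal (e : S) : isAdditiveIdeal (connIdeal e) := by
  refine ⟨⟨0, fun g _ _ h => absurd (zm g) h⟩, fun a ha s => ⟨?_, ?_⟩, ?_⟩
  · intro g hg hgi h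
    refine ha g hg hgi (fun h0 => h ?_)
    rw [ma, h0, mz]
  · intro g hg hgi h
    have hs : s * g ≠ 0 := fun h0 => h (by rw [ma, h0, mz])
    have hd := d_of_below hgi (atom_below hg hgi hs)
    have hy : isAtomElem (s * g) := atom_of_d (by rw [hd]; exact hg)
    refine conn_trans (ha _ (r_atom hy) (idem_r _) fun h0 => h ?_)
      (conn_symm ⟨s * g, hy, hd, rfl⟩)
    rw [ma, ← aia (s * g)]
    have : a * (s * g * ((s * g)⁻¹ * (s * g))) = a * (s * g * (s * g)⁻¹) * (s * g) := by
      simp only [ma]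
    rw [this, h0, zm]
  · intro a ha b hb _ j hj g hg hgi h
    have hjg := IsBooleanInverseSemigroup.join_mul a b j g hj
    by_cases h1 : a * g = 0
    · by_cases h2 : b * g = 0
      · rw [h1, h2] at hjg
        exact absurd (join_zero hjg) h
      · exact hb g hg hgi h2
    · exact ha g hg hgi h1

end Helpers

/-- For a finite Boolean inverse monoid: (1) it is fundamental iff its groupoid of
atoms is principal (every atom `a` with `d(a) = r(a)` is an identity of the
groupoid, i.e. an idempotent); (2) it is `0`-simplifying iff its groupoid of atoms
is connected (any two atomic idempotents are joined by an atom). -/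
theorem finite_fundamental_and_zeroSimplifying (S : Type*)
    [Mul S] [Zero S] [Inv S] [One S] [IsBooleanInverseSemigroup S] [Finite S]
    (hone : ∀ a : S, 1 * a = a ∧ a * 1 = a) :
    (isFundamental S ↔
      ∀ a : S, isAtomElem a → a⁻¹ * a = a * a⁻¹ → idem a) ∧
    (isZeroSimplifying S ↔
      ∀ e f : S, isAtomElem e → isAtomElem f → idem e → idem f →
        ∃ x : S, isAtomElem x ∧ x⁻¹ * x = e ∧ x * x⁻¹ = f) := by
  have hidem1 : idem (1 : S) := (hone 1).1
  refine ⟨⟨?_, ?_⟩, ⟨?_, ?_⟩⟩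
  · intro hF a ha hd
    refine hF a fun f hf => ?_
    have e1 : a * f = a * ((a⁻¹ * a) * f) := by rw [← ma, aia]
    have e2 : f * a = ((a⁻¹ * a) * f) * a := by
      rw [idem_comm (idem_d a) hf, hd]
      simp only [ma]
      rw [aia]
    rcases atom_idem (d_atom ha) hf with h | h
    · rw [e1, e2, h, aia, hd, ma, aia]
    · rw [e1, e2, h, mz, zm]
  · intro hP a hc
    have := idem_induction (fun f => idem (a * f)) (by rw [mz]; exact idem_zero) ?_ ?_ 1 hidem1
    · rwa [(hone a).2] at this
    · intro e he hea
      by_cases h0 : a * e = 0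
      · rw [h0]; exact idem_zero
      have hd := d_of_below he (atom_below hea he h0)
      have hat : isAtomElem (a * e) := atom_of_d (by rw [hd]; exact hea)
      apply hP _ hat
      rw [hd]
      have hr : a * e * (a * e)⁻¹ = e * (a * (a * e)⁻¹) := by
        rw [← ma, ← hc e he]
      have hle : nle (a * e * (a * e)⁻¹) e := by
        rw [nle_idem (idem_r _), hr, ass _ _ he]
      rcases hea.2 _ hle with h | h
      · exact h.symm
      · exact absurd h (r_atom hat).1
    · intro e g f _ _ hj h1 h2
      exact join_idem h1 h2 (IsBooleanInverseSemigroup.mul_join e g f a hj)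
  · intro hZ e f he hf hei hfi
    have hee : ∀ g : S, isAtomElem g → idem g → conn g g := fun g hg hgi =>
      ⟨g, hg, by rw [idem_inv hgi, hgi], by rw [idem_inv hgi, hgi]⟩
    have hmem : e ∈ connIdeal e := by
      intro g hg hgi h
      have h1 := (atom_idem he hgi).resolve_right h
      have h2 := (atom_idem hg hei).resolve_right (by rwa [idem_comm hgi hei])
      have : g = e := by rw [← h2, idem_comm hgi hei, h1]
      rw [this]; exact hee e he hei
    rcases hZ.2 _ (connIdeal_ideal e) with h | h
    · rw [h] at hmem; exact absurd hmem he.1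
    · have : f ∈ connIdeal e := by rw [h]; trivial
      exact this f hf hfi (by rw [hfi]; exact hf.1)
  · intro hC
    refine ⟨IsBooleanInverseSemigroup.exists_ne_zero, fun I hI => ?_⟩
    obtain ⟨⟨b, hb⟩, hI1, hI2⟩ := hI
    have hz : (0 : S) ∈ I := by
      have := (hI1 b hb 0).1
      rwa [zm] at this
    by_cases hall : ∀ a ∈ I, a = 0
    · left
      ext a
      exact ⟨fun h => hall a h, fun h => by rw [Set.mem_singleton_iff.1 h]; exact hz⟩
    right
    push Not at hall
    obtain ⟨a, ha, ha0⟩ := hall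
    obtain ⟨e, he, hle⟩ := exists_atom (a⁻¹ * a) (fun h => ha0 (d_eq_zero h))
    have hei := idem_of_nle (idem_d a) hle
    have heI : e ∈ I := by
      rw [nle_idem hei] at hle
      rw [hle]
      exact (hI1 _ (hI1 a ha _).1 _).2
    have h1 : (1 : S) ∈ I := by
      refine idem_induction (fun f => f ∈ I) hz ?_ ?_ 1 hidem1
      · intro f hfi hf
        obtain ⟨x, hx, hxe, hxf⟩ := hC e f he hf hei hfi
        have : f = x * e * x⁻¹ := by rw [← hxe, aia, hxf]
        show f ∈ I
        rw [this]
        exact (hI1 _ (hI1 e heI _).1 _).2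
      · intro e g f h1 h2 hj he hg
        exact hI2 e he g hg (compat_idem h1 h2) f hj
    ext s
    refine ⟨fun _ => trivial, fun _ => ?_⟩
    have := (hI1 1 h1 s).1
    rwa [(hone s).2] at this

end Paper
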